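/- Let p be a selective ultrafilter on ω. Then 𝓖^p is a cancellative subsemigroup of the semigroup of ultrafilters on ω: for any u, v, w ∈ 𝓖^p, u + w = v + w implies u = v, and u + v = u + w implies v = w. -/

import Mathlib

open Filter

attribute [local instance] Ultrafilter.add Ultrafilter.addSemigroup

/-- `sumPow u n` is the `n`-fold sum `u + ⋯ + u` of the ultrafilter `u`, for `n ≥ 1`
(with junk value `u` at `n = 0`). -/
def sumPow (u : Ultrafilter ℕ) : ℕ → Ultrafilter ℕ
  | 0 => u
  | 1 => u
  | n + 2 => sumPow u (n + 1) + u

/-- The `u`-limit of a sequence of ultrafilters: `A ∈ ulim u v ↔ {n | A ∈ v n} ∈ u`. -/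
def ulim {α : Type*} (u : Ultrafilter ℕ) (v : ℕ → Ultrafilter α) : Ultrafilter α := u.bind v

/-- `InG p` is the smallest family of ultrafilters on `ℕ` containing all principal ultrafilters
and closed under `p`-limits. -/
inductive InG (p : Ultrafilter ℕ) : Ultrafilter ℕ → Prop
  | principal (n : ℕ) : InG p (pure n)
  | lim (v : ℕ → Ultrafilter ℕ) : (∀ n, InG p (v n)) → InG p (ulim p v)

/-- A selective ultrafilter: nonprincipal, and every `f : ℕ → ℕ` is constant or injective on
some set of the ultrafilter. -/
def IsSelective (p : Ultrafilter ℕ) : Prop :=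
  (∀ n : ℕ, p ≠ pure n) ∧
    ∀ f : ℕ → ℕ, ∃ A ∈ p, (∃ c, ∀ a ∈ A, f a = c) ∨ Set.InjOn f A

/-!
If `x` is injective on a set of the selective ultrafilter `p`, then `p`-almost all `x k` form a
discrete family: some `f` satisfies `f = k` almost everywhere with respect to `x k`. Comparing such
index functions for two injective sequences `x` and `y` with the same `p`-limit, and using that
`p` is minimal (only the identity maps `p` to itself) and a P-point, one gets `x k = y k` for
`p`-almost all `k`. So every element of `𝓖^p` is a well-founded tree of limits that is essentially
unique, and cancellation follows by comparing trees. The one case where the shapes of the trees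
differ is `n + w = (p-lim y) + w`; there some branch `n + z` of `n + w`, of smaller rank than `w`,
would equal some `y k + w`, whose rank is at least that of `w`.
-/

section Ultrafilters

variable {α β : Type*}

theorem exists_mem_notMem_of_ne {u v : Ultrafilter α} (h : u ≠ v) : ∃ S ∈ u, S ∉ v :=
  Filter.not_le.1 fun hle => h (Ultrafilter.eq_of_le hle).symm

theorem exists_mem_forall_notMem_of_finite {u : Ultrafilter α} {F : Set (Ultrafilter α)}
    (hF : F.Finite) (hu : u ∉ F) : ∃ S ∈ u, ∀ v ∈ F, S ∉ v := by
  have hsep : ∀ v : Ultrafilter α, ∃ S ∈ u, v ∈ F → S ∉ v := fun v => by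
    by_cases hv : v ∈ F
    · obtain ⟨S, hSu, hSv⟩ := exists_mem_notMem_of_ne (ne_of_mem_of_not_mem hv hu).symm
      exact ⟨S, hSu, fun _ => hSv⟩
    · exact ⟨Set.univ, Filter.univ_mem, fun h => (hv h).elim⟩
  choose S hSu hSv using hsep
  exact ⟨⋂ v ∈ F, S v, (Filter.biInter_mem hF).2 fun v _ => hSu v,
    fun v hv hmem => hSv v hv (Filter.mem_of_superset hmem (Set.biInter_subset_of_mem hv))⟩

theorem ultrafilter_map_injective {f : α → β} (hf : Function.Injective f) :
    Function.Injective (Ultrafilter.map f) := fun _ _ h =>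
  Ultrafilter.coe_injective (Filter.map_injective hf (congrArg Ultrafilter.toFilter h))

theorem map_eq_pure_iff {u : Ultrafilter α} {f : α → β} {b : β} :
    u.map f = pure b ↔ ∀ᶠ a in u, f a = b := by
  rw [← Ultrafilter.coe_le_coe, Ultrafilter.coe_pure, Filter.le_pure_iff]
  rfl

theorem exists_mem_iff_notMem_of_lt [Preorder α] [WellFoundedLT α] (c : α → α) :
    ∃ L : Set α, ∀ a, c a < a → (a ∈ L ↔ c a ∉ L) := by
  let L : α → Prop := wellFounded_lt.fix fun a ih => ∃ h : c a < a, ¬ih (c a) h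
  have hL : ∀ a, L a ↔ ∃ _ : c a < a, ¬L (c a) := fun a => by
    simp only [L]
    rw [WellFounded.fix_eq]
  exact ⟨{a | L a}, fun a ha => (hL a).trans (exists_prop_of_true ha)⟩

theorem not_eventually_lt_of_map_eq_self [Preorder α] [WellFoundedLT α] {u : Ultrafilter α}
    {c : α → α} (h : u.map c = u) : ¬∀ᶠ a in u, c a < a := by
  intro hlt
  obtain ⟨L, hL⟩ := exists_mem_iff_notMem_of_lt c
  have hmem : L ∈ u ↔ ∀ᶠ a in u, c a ∈ L := by
    conv_lhs => rw [← h]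
    rfl
  have hcolor : (∀ᶠ a in u, a ∈ L) ↔ ∀ᶠ a in u, c a ∉ L :=
    eventually_congr (hlt.mono hL)
  rw [Ultrafilter.eventually_not, ← hmem] at hcolor
  exact iff_not_self hcolor

end Ultrafilters

section Addition

theorem pure_add_eq_map {M : Type*} [Add M] (a : M) (w : Ultrafilter M) :
    pure a + w = w.map (a + ·) := rfl

theorem pure_add_right_injective {M : Type*} [Add M] [IsLeftCancelAdd M] (a : M) :
    Function.Injective fun w : Ultrafilter M => pure a + w :=
  ultrafilter_map_injective (add_right_injective a)

theorem add_pure_left_injective {M : Type*} [Add M] [IsRightCancelAdd M] (a : M) :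
    Function.Injective fun w : Ultrafilter M => w + pure a :=
  ultrafilter_map_injective (add_left_injective a)

theorem eq_zero_of_pure_add_eq_self {d : ℕ} {w : Ultrafilter ℕ} (h : pure d + w = w) : d = 0 := by
  by_contra hd
  have hadd : w.map (d + ·) = w := h
  have hsub : w.map (· - d) = w := by
    conv_lhs => rw [← hadd]
    rw [Ultrafilter.map_map, show (· - d) ∘ (d + ·) = (id : ℕ → ℕ) by ext; simp,
      Ultrafilter.map_id]
  have hlt : ∀ᶠ k in w.map (d + ·), k - d < k :=
    show ∀ᶠ k in w, d + k - d < d + k from Eventually.of_forall fun k => by lia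
  exact not_eventually_lt_of_map_eq_self hsub (hadd ▸ hlt)

theorem pure_add_left_injective (w : Ultrafilter ℕ) :
    Function.Injective fun n : ℕ => pure n + w := by
  intro n m h
  wlog hle : n ≤ m generalizing n m
  · exact (this h.symm (le_of_not_ge hle)).symm
  obtain ⟨d, rfl⟩ := Nat.exists_eq_add_of_le hle
  have hd : pure n + w = pure n + (pure d + w) := by
    rw [← add_assoc, pure_add_eq_map n (pure d), Ultrafilter.map_pure]
    exact h
  simp [eq_zero_of_pure_add_eq_self (pure_add_right_injective n hd).symm]

end Addition

section Limits

variable {α β : Type*} {p : Ultrafilter ℕ} {x y : ℕ → Ultrafilter α}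

theorem mem_ulim {S : Set α} : S ∈ ulim p x ↔ ∀ᶠ k in p, S ∈ x k := Iff.rfl

theorem ulim_congr (h : ∀ᶠ k in p, x k = y k) : ulim p x = ulim p y :=
  Ultrafilter.ext fun S => by
    rw [mem_ulim, mem_ulim, eventually_congr (h.mono fun k hk => by rw [hk])]

theorem ulim_eq_of_eventually_eq {q : Ultrafilter α} (h : ∀ᶠ k in p, x k = q) : ulim p x = q :=
  Ultrafilter.ext fun S => by
    rw [mem_ulim, eventually_congr (h.mono fun k hk => by rw [hk]), eventually_const]

theorem ulim_pure (c : ℕ → α) : ulim p (fun k => pure (c k)) = p.map c := rfl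

theorem map_ulim (f : α → β) (x : ℕ → Ultrafilter α) :
    (ulim p x).map f = ulim p fun k => (x k).map f := rfl

theorem ulim_add {M : Type*} [Add M] (x : ℕ → Ultrafilter M) (w : Ultrafilter M) :
    ulim p x + w = ulim p fun k => x k + w := rfl

theorem pure_add_ulim {M : Type*} [Add M] (a : M) (x : ℕ → Ultrafilter M) :
    pure a + ulim p x = ulim p fun k => pure a + x k := rfl

end Limits

section Selective

variable {α : Type*} {p : Ultrafilter ℕ}

/-- `InjAlong p x` says that the sequence `x` is injective modulo `p`, that is, injective on some
set of `p`. -/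
def InjAlong (p : Ultrafilter ℕ) (x : ℕ → α) : Prop := ∃ A ∈ p, Set.InjOn x A

theorem InjAlong.of_imp {β : Type*} {x : ℕ → α} {y : ℕ → β} (hx : InjAlong p x)
    (h : ∀ j k, y j = y k → x j = x k) : InjAlong p y := by
  obtain ⟨A, hA, hinj⟩ := hx
  exact ⟨A, hA, fun j hj k hk hjk => hinj hj hk (h j k hjk)⟩

theorem IsSelective.injAlong_or_eventually_eq_ulim (hp : IsSelective p) (x : ℕ → Ultrafilter α) :
    InjAlong p x ∨ ∀ᶠ k in p, x k = ulim p x := by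
  have hlabel : ∀ k, x (Function.invFun x (x k)) = x k := fun k => Function.invFun_eq ⟨k, rfl⟩
  obtain ⟨A, hA, ⟨c, hc⟩ | hinj⟩ := hp.2 fun k => Function.invFun x (x k)
  · have hconst : ∀ᶠ k in p, x k = x c := by
      filter_upwards [hA] with k hk
      rw [← hlabel k, hc k hk]
    rw [ulim_eq_of_eventually_eq hconst]
    exact Or.inr hconst
  · exact Or.inl ⟨A, hA, fun j hj k hk hjk => hinj hj hk (congrArg (Function.invFun x) hjk)⟩

theorem IsSelective.le_cofinite (hp : IsSelective p) : (p : Filter ℕ) ≤ cofinite :=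
  p.le_cofinite_or_eq_pure.resolve_right fun ⟨n, hn⟩ => hp.1 n hn

theorem IsSelective.eventually_gt (hp : IsSelective p) (n : ℕ) : ∀ᶠ k in p, n < k :=
  hp.le_cofinite (Nat.cofinite_eq_atTop ▸ eventually_gt_atTop n)

theorem IsSelective.notMem_of_finite (hp : IsSelective p) {S : Set ℕ} (hS : S.Finite) : S ∉ p :=
  Ultrafilter.compl_mem_iff_notMem.1 (hp.le_cofinite hS.compl_mem_cofinite)

theorem IsSelective.exists_pseudointersection (hp : IsSelective p) {S : ℕ → Set ℕ}
    (hS : ∀ n, S n ∈ p) : ∃ A ∈ p, ∀ n, (A \ S n).Finite := by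
  classical
  -- The alternative `m ≤ n` only makes `firstExit` total.
  have hfirstExit : ∀ m, ∃ n, m ∉ S n ∨ m ≤ n := fun m => ⟨m, Or.inr le_rfl⟩
  let firstExit : ℕ → ℕ := fun m => Nat.find (hfirstExit m)
  obtain ⟨A, hA, ⟨c, hc⟩ | hinj⟩ := hp.2 firstExit
  · have hev : ∀ᶠ m in p, m ∈ A ∧ m ∈ S c ∧ c < m := by
      filter_upwards [hA, hS c, hp.eventually_gt c] with m hmA hmS hcm using ⟨hmA, hmS, hcm⟩
    obtain ⟨m, hmA, hmS, hcm⟩ := hev.exists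
    have hspec : m ∉ S (firstExit m) ∨ m ≤ firstExit m := Nat.find_spec (hfirstExit m)
    rw [hc m hmA] at hspec
    exact (hspec.elim (· hmS) hcm.not_ge).elim
  · refine ⟨A, hA, fun n => Set.Finite.of_finite_image ?_ (hinj.mono Set.sdiff_subset)⟩
    refine (Set.finite_Iic n).subset ?_
    rintro _ ⟨m, ⟨-, hm⟩, rfl⟩
    exact Nat.find_min' (hfirstExit m) (Or.inl hm)

theorem IsSelective.eventually_eq_of_map_eq_self (hp : IsSelective p) {c : ℕ → ℕ}
    (h : p.map c = p) : ∀ᶠ n in p, c n = n := by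
  have htri : ∀ᶠ n in p, c n < n ∨ c n = n ∨ n < c n :=
    Eventually.of_forall fun n => lt_trichotomy (c n) n
  rw [Ultrafilter.eventually_or, Ultrafilter.eventually_or] at htri
  obtain hlt | heq | hgt := htri
  · exact (not_eventually_lt_of_map_eq_self h hlt).elim
  · exact heq
  obtain ⟨A, hA, ⟨d, hd⟩ | hinj⟩ := hp.2 c
  · exact (hp.1 d (h.symm.trans (map_eq_pure_iff.2 (mem_of_superset hA hd)))).elim
  -- A left inverse of `c` on `A` also fixes `p`, but it is regressive.
  let g := Function.invFunOn c A
  have hgc : ∀ᶠ n in p, g (c n) = n := mem_of_superset hA hinj.leftInvOn_invFunOn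
  have hg : p.map g = p := by
    conv_lhs => rw [← h]
    exact Ultrafilter.coe_injective ((Filter.map_congr hgc).trans Filter.map_id)
  refine (not_eventually_lt_of_map_eq_self hg ?_).elim
  rw [← h]
  change ∀ᶠ n in p, g (c n) < c n
  filter_upwards [hgc, hgt] with n hn hlt
  rwa [hn]

theorem IsSelective.eventually_eq_self_or_pure_of_ulim_eq_self (hp : IsSelective p)
    {r : ℕ → Ultrafilter ℕ} (h : ulim p r = p) : ∀ᶠ k in p, r k = p ∨ ∃ n, r k = pure n := by
  have hsep : ∀ k, ∃ S ∈ p, r k ≠ p → S ∉ r k := fun k => by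
    by_cases hk : r k = p
    · exact ⟨Set.univ, Filter.univ_mem, fun hne => (hne hk).elim⟩
    · obtain ⟨S, hSp, hSr⟩ := exists_mem_notMem_of_ne (Ne.symm hk)
      exact ⟨S, hSp, fun _ => hSr⟩
  choose S hSp hSr using hsep
  obtain ⟨A, hA, hfin⟩ := hp.exists_pseudointersection hSp
  rw [← h, mem_ulim] at hA
  filter_upwards [hA] with k hk
  refine or_iff_not_imp_left.2 fun hne => ?_
  have hdiff : A \ S k ∈ r k := (Ultrafilter.sdiff_mem_iff _).2 ⟨hk, hSr k hne⟩
  obtain ⟨n, -, hn⟩ := Ultrafilter.eq_pure_of_finite_mem (hfin k) hdiff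
  exact ⟨n, hn⟩

theorem IsSelective.eventually_eq_self_or_eventually_eq_pure (hp : IsSelective p)
    {r : ℕ → Ultrafilter ℕ} (h : ulim p r = p) :
    (∀ᶠ k in p, r k = p) ∨ ∀ᶠ k in p, r k = pure k := by
  refine (Ultrafilter.eventually_or.1 (hp.eventually_eq_self_or_pure_of_ulim_eq_self h)).imp_right
    fun hprin => ?_
  obtain ⟨c, hc⟩ := hprin.choice
  have hmap : p.map c = p := by
    rw [← ulim_pure, ← ulim_congr hc, h]
  filter_upwards [hc, hp.eventually_eq_of_map_eq_self hmap] with k hk hck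
  rw [hk, hck]

end Selective

section Uniqueness

variable {α : Type*} {p : Ultrafilter ℕ} {x y : ℕ → Ultrafilter α} {f g : α → ℕ}

/-- `f` is an index function for `x` along `p` if it recovers the index `k` from a typical point
of `x k`; its existence expresses that the `x k` form a discrete family modulo `p`. -/
def IsIndexFunction (p : Ultrafilter ℕ) (x : ℕ → Ultrafilter α) (f : α → ℕ) : Prop :=
  ∀ᶠ k in p, ∀ᶠ a in x k, f a = k

theorem exists_forall_eventually_eq_of_separated {C : Set ℕ} {V : ℕ → Set α}
    (hmem : ∀ k ∈ C, V k ∈ x k) (hsep : ∀ j ∈ C, ∀ k ∈ C, j < k → V j ∉ x k) :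
    ∃ f : α → ℕ, ∀ k ∈ C, ∀ᶠ a in x k, f a = k := by
  refine ⟨fun a => sInf {k ∈ C | a ∈ V k}, fun k hk => ?_⟩
  have hbelow : ∀ᶠ a in x k, ∀ j ∈ Set.Iio k, j ∈ C → a ∉ V j := by
    refine (eventually_all_finite (Set.finite_Iio k)).2 fun j hjk => ?_
    by_cases hj : j ∈ C
    · exact (Ultrafilter.eventually_not.2 (hsep j hj k hk hjk)).mono fun _ ha _ => ha
    · exact Eventually.of_forall fun _ hj' => (hj hj').elim
  filter_upwards [hmem k hk, hbelow] with a hak ha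
  refine le_antisymm (Nat.sInf_le ⟨hk, hak⟩) (le_csInf ⟨k, hk, hak⟩ ?_)
  rintro j ⟨hj, haj⟩
  exact not_lt.1 fun hjk => ha j hjk hj haj

theorem IsSelective.eventually_ne_of_injAlong (hp : IsSelective p) (hx : InjAlong p x)
    (q : Ultrafilter α) : ∀ᶠ k in p, x k ≠ q := by
  obtain ⟨A, hA, hinj⟩ := hx
  refine Ultrafilter.eventually_not.2 fun hq => ?_
  have hsub : (A ∩ {k | x k = q}).Subsingleton := fun j hj k hk =>
    hinj hj.1 hk.1 (hj.2.trans hk.2.symm)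
  exact hp.notMem_of_finite hsub.finite (Filter.inter_mem hA hq)

theorem IsSelective.exists_separated_of_injAlong (hp : IsSelective p) (hx : InjAlong p x) :
    ∃ C ∈ p, ∀ k ∈ C, ∃ V ∈ x k, ∀ j ∈ C, j ≠ k → V ∉ x j := by
  have hU : ∀ k, ∃ U, U ∉ ulim p x ∧ (x k ≠ ulim p x → U ∈ x k) := fun k => by
    by_cases hk : x k = ulim p x
    · exact ⟨∅, Ultrafilter.empty_notMem, fun hne => (hne hk).elim⟩
    · obtain ⟨U, hUx, hUq⟩ := exists_mem_notMem_of_ne hk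
      exact ⟨U, hUq, fun _ => hUx⟩
  choose U hUq hUx using hU
  obtain ⟨B, hB, hfin⟩ :=
    hp.exists_pseudointersection fun k => Ultrafilter.eventually_not.2 (hUq k)
  have hne := hp.eventually_ne_of_injAlong hx (ulim p x)
  obtain ⟨A, hA, hinj⟩ := hx
  refine ⟨A ∩ B ∩ {k | x k ≠ ulim p x}, Filter.inter_mem (Filter.inter_mem hA hB) hne, ?_⟩
  rintro k ⟨⟨hkA, -⟩, hkq⟩
  -- `U k` separates `x k` from all but finitely many of the other `x j`.
  obtain ⟨W, hWk, hW⟩ := exists_mem_forall_notMem_of_finite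
    (((hfin k).image x).sdiff (t := {x k})) (fun hmem => hmem.2 rfl)
  refine ⟨U k ∩ W, Filter.inter_mem (hUx k hkq) hWk, ?_⟩
  rintro j ⟨⟨hjA, hjB⟩, -⟩ hjk hmem
  have hUj : U k ∈ x j := Filter.mem_of_superset hmem Set.inter_subset_left
  have hWj : W ∈ x j := Filter.mem_of_superset hmem Set.inter_subset_right
  exact hW (x j) ⟨⟨j, ⟨hjB, fun hj => hj hUj⟩, rfl⟩, fun hxj => hjk (hinj hjA hkA hxj)⟩ hWj

theorem IsSelective.exists_isIndexFunction (hp : IsSelective p) (hx : InjAlong p x) :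
    ∃ f, IsIndexFunction p x f := by
  obtain ⟨C, hC, hV⟩ := hp.exists_separated_of_injAlong hx
  choose! V hVmem hVsep using hV
  obtain ⟨f, hf⟩ := exists_forall_eventually_eq_of_separated hVmem
    fun j hj k hk hjk => hVsep j hj k hk hjk.ne'
  exact ⟨f, mem_of_superset hC hf⟩

theorem IsIndexFunction.map_ulim (hf : IsIndexFunction p x f) : (ulim p x).map f = p := by
  have hpure : ∀ᶠ k in p, (x k).map f = pure k := hf.mono fun k hk => map_eq_pure_iff.2 hk
  rw [_root_.map_ulim, ulim_congr hpure, ulim_pure]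
  exact Ultrafilter.map_id p

theorem IsIndexFunction.eventually_eq_of_ulim_eq (hx : IsIndexFunction p x f)
    (hy : IsIndexFunction p y f) (h : ulim p x = ulim p y) : ∀ᶠ k in p, x k = y k := by
  by_contra hne
  have hS : ∀ k, ∃ S, x k ≠ y k → S ∈ x k ∧ S ∉ y k := fun k => by
    by_cases hk : x k = y k
    · exact ⟨∅, fun hne => (hne hk).elim⟩
    · obtain ⟨S, hS⟩ := exists_mem_notMem_of_ne hk
      exact ⟨S, fun _ => hS⟩
  choose S hS using hS
  -- Glue the separating sets along `f`.
  have hglue : ∀ {z : Ultrafilter α} {k : ℕ}, (∀ᶠ a in z, f a = k) →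
      ({a | a ∈ S (f a)} ∈ z ↔ S k ∈ z) := fun {z k} hz =>
    show (∀ᶠ a in z, a ∈ S (f a)) ↔ ∀ᶠ a in z, a ∈ S k from
      eventually_congr (hz.mono fun a ha => by rw [ha])
  have hmem : {a | a ∈ S (f a)} ∈ ulim p x := by
    rw [mem_ulim]
    filter_upwards [hx, Ultrafilter.eventually_not.2 hne] with k hk hnek
    exact (hglue hk).2 (hS k hnek).1
  rw [h, mem_ulim] at hmem
  obtain ⟨k, hmemk, hk, hnek⟩ := (hmem.and (hy.and (Ultrafilter.eventually_not.2 hne))).exists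
  exact (hS k hnek).2 ((hglue hk).1 hmemk)

theorem IsSelective.eventually_lt_of_isIndexFunction (hp : IsSelective p)
    (hf : IsIndexFunction p x f) (hg : ∀ᶠ k in p, (x k).map g = p) :
    ∀ᶠ a in ulim p x, f a < g a := by
  change ∀ᶠ k in p, ∀ᶠ a in x k, f a < g a
  filter_upwards [hf, hg] with k hfk hgk
  have hlt : ∀ᶠ b in (x k).map g, k < b := hgk ▸ hp.eventually_gt k
  filter_upwards [hfk, hlt] with a hfa hga
  rwa [hfa]

theorem IsSelective.eventually_eq_of_ulim_eq (hp : IsSelective p) (hx : InjAlong p x)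
    (hy : InjAlong p y) (h : ulim p x = ulim p y) : ∀ᶠ k in p, x k = y k := by
  obtain ⟨f, hf⟩ := hp.exists_isIndexFunction hx
  obtain ⟨g, hg⟩ := hp.exists_isIndexFunction hy
  have hfy : ulim p (fun k => (y k).map f) = p := by
    rw [← map_ulim, ← h, hf.map_ulim]
  have hgx : ulim p (fun k => (x k).map g) = p := by
    rw [← map_ulim, h, hg.map_ulim]
  rcases hp.eventually_eq_self_or_eventually_eq_pure hfy with hfy | hfy
  · rcases hp.eventually_eq_self_or_eventually_eq_pure hgx with hgx | hgx
    · have hfg : ∀ᶠ a in ulim p x, f a < g a := hp.eventually_lt_of_isIndexFunction hf hgx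
      have hgf : ∀ᶠ a in ulim p x, g a < f a := h ▸ hp.eventually_lt_of_isIndexFunction hg hfy
      obtain ⟨a, hlt, hgt⟩ := (hfg.and hgf).exists
      exact (lt_asymm hlt hgt).elim
    · exact IsIndexFunction.eventually_eq_of_ulim_eq
        (hgx.mono fun k hk => map_eq_pure_iff.1 hk) hg h
  · exact hf.eventually_eq_of_ulim_eq (hfy.mono fun k hk => map_eq_pure_iff.1 hk) h

theorem IsSelective.ulim_ne_pure (hp : IsSelective p) (hx : InjAlong p x) (a : α) :
    ulim p x ≠ pure a := by
  intro h
  obtain ⟨f, hf⟩ := hp.exists_isIndexFunction hx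
  have hpure := hf.map_ulim
  rw [h, Ultrafilter.map_pure] at hpure
  exact hp.1 _ hpure.symm

end Uniqueness

section Rank

variable {p : Ultrafilter ℕ} {α β : Ordinal.{0}} {u v w : Ultrafilter ℕ}

/-- `HasRankLE p α u` says that `u` is obtained from principal ultrafilters by a well-founded tree
of `p`-limits of rank at most `α`. -/
inductive HasRankLE (p : Ultrafilter ℕ) : Ordinal.{0} → Ultrafilter ℕ → Prop
  | principal (α : Ordinal.{0}) (n : ℕ) : HasRankLE p α (pure n)
  | lim (α : Ordinal.{0}) (β : ℕ → Ordinal.{0}) (x : ℕ → Ultrafilter ℕ) (hβ : ∀ k, β k < α)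
      (hx : ∀ k, HasRankLE p (β k) (x k)) : HasRankLE p α (ulim p x)

theorem HasRankLE.mono (h : HasRankLE p α u) (hle : α ≤ β) : HasRankLE p β u := by
  cases h with
  | principal _ n => exact principal β n
  | lim _ γ x hγ hx => exact lim β γ x (fun k => (hγ k).trans_le hle) hx

theorem HasRankLE.map (f : ℕ → ℕ) (h : HasRankLE p α u) : HasRankLE p α (u.map f) := by
  induction h with
  | principal α n => exact principal α (f n)
  | lim α β x hβ _ ih => exact lim α β (fun k => (x k).map f) hβ ih

theorem InG.exists_hasRankLE (h : InG p u) : ∃ α, HasRankLE p α u := by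
  induction h with
  | principal n => exact ⟨0, .principal 0 n⟩
  | lim x _ ih =>
    choose β hβ using ih
    exact ⟨_, .lim _ β x (fun k => Order.lt_succ_of_le (Ordinal.le_iSup β k)) hβ⟩

theorem HasRankLE.eq_pure_or_eq_ulim_injAlong (hp : IsSelective p) (h : HasRankLE p α u) :
    (∃ n, u = pure n) ∨
      ∃ x, InjAlong p x ∧ u = ulim p x ∧ ∀ k, ∃ β < α, HasRankLE p β (x k) := by
  induction h with
  | principal α n => exact Or.inl ⟨n, rfl⟩
  | lim α β x hβ hx ih =>
    rcases hp.injAlong_or_eventually_eq_ulim x with hinj | hconst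
    · exact Or.inr ⟨x, hinj, rfl, fun k => ⟨β k, hβ k, hx k⟩⟩
    · obtain ⟨k, hk⟩ := hconst.exists
      rw [← hk]
      refine (ih k).imp_right fun ⟨z, hz, hxz, hrank⟩ => ⟨z, hz, hxz, fun j => ?_⟩
      obtain ⟨γ, hγ, hzj⟩ := hrank j
      exact ⟨γ, hγ.trans (hβ k), hzj⟩

theorem HasRankLE.of_pure_add {n : ℕ} (h : HasRankLE p α (pure n + w)) : HasRankLE p α w := by
  have hsub := h.map (· - n)
  rwa [pure_add_eq_map, Ultrafilter.map_map, show (· - n) ∘ (n + ·) = (id : ℕ → ℕ) by ext; simp,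
    Ultrafilter.map_id] at hsub

theorem HasRankLE.of_add (hp : IsSelective p) (hv : InG p v) (h : HasRankLE p α (v + w)) :
    HasRankLE p α w := by
  induction hv generalizing α with
  | principal n => exact h.of_pure_add
  | lim y _ ih =>
    rw [ulim_add] at h
    rcases hp.injAlong_or_eventually_eq_ulim fun k => y k + w with hinj | hconst
    · obtain ⟨n, hn⟩ | ⟨z, hz, hyz, hrank⟩ := h.eq_pure_or_eq_ulim_injAlong hp
      · exact (hp.ulim_ne_pure hinj n hn).elim
      · obtain ⟨k, hk⟩ := (hp.eventually_eq_of_ulim_eq hinj hz hyz).exists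
        obtain ⟨β, hβ, hzk⟩ := hrank k
        exact (ih k (hk ▸ hzk)).mono hβ.le
    · obtain ⟨k, hk⟩ := hconst.exists
      exact ih k (hk ▸ h)

end Rank

section Cancellation

variable {p : Ultrafilter ℕ} {u v w : Ultrafilter ℕ}

theorem IsSelective.pure_add_ne_ulim_add (hp : IsSelective p) (hw : InG p w) (n : ℕ)
    {y : ℕ → Ultrafilter ℕ} (hy : ∀ k, InG p (y k)) (hinj : InjAlong p fun k => y k + w) :
    pure n + w ≠ ulim p y + w := by
  intro h
  obtain ⟨α, hα, hmin⟩ := wellFounded_lt.has_min {α | HasRankLE p α w} hw.exists_hasRankLE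
  obtain ⟨m, rfl⟩ | ⟨z, hz, hwz, hrank⟩ := hα.eq_pure_or_eq_ulim_injAlong hp
  · have hyinj : InjAlong p y := hinj.of_imp fun j k => congrArg (· + pure m)
    exact hp.ulim_ne_pure hyinj n (add_pure_left_injective m h).symm
  · have hzinj : InjAlong p fun k => pure n + z k :=
      hz.of_imp fun j k hjk => pure_add_right_injective n hjk
    have hlim : ulim p (fun k => pure n + z k) = ulim p fun k => y k + w := by
      rw [← pure_add_ulim, ← hwz, h, ulim_add]
    obtain ⟨k, hk⟩ := (hp.eventually_eq_of_ulim_eq hzinj hinj hlim).exists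
    obtain ⟨β, hβ, hzk⟩ := hrank k
    have hadd : HasRankLE p β (y k + w) := hk ▸ hzk.map (n + ·)
    exact hmin β (hadd.of_add hp (hy k)) hβ

theorem IsSelective.eq_pure_of_add_eq_pure_add (hp : IsSelective p) (hw : InG p w) {n : ℕ}
    (hv : InG p v) (h : v + w = pure n + w) : v = pure n := by
  induction hv with
  | principal m => rw [pure_add_left_injective w h]
  | lim y hy ih =>
    rcases hp.injAlong_or_eventually_eq_ulim fun k => y k + w with hinj | hconst
    · exact (hp.pure_add_ne_ulim_add hw n hy hinj h.symm).elim
    · exact ulim_eq_of_eventually_eq (hconst.mono fun k hk => ih k (hk.trans h))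

theorem IsSelective.add_right_cancel (hp : IsSelective p) (hu : InG p u) (hv : InG p v)
    (hw : InG p w) (h : u + w = v + w) : u = v := by
  induction hu generalizing v with
  | principal n => exact (hp.eq_pure_of_add_eq_pure_add hw hv h.symm).symm
  | lim x hx ihx =>
    rcases hp.injAlong_or_eventually_eq_ulim fun k => x k + w with hxinj | hxconst
    · induction hv with
      | principal n => exact hp.eq_pure_of_add_eq_pure_add hw (.lim x hx) h
      | lim y hy ihy =>
        rcases hp.injAlong_or_eventually_eq_ulim fun k => y k + w with hyinj | hyconst
        · refine ulim_congr ((hp.eventually_eq_of_ulim_eq hxinj hyinj h).mono fun k hk => ?_)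
          exact ihx k (hy k) hk
        · refine (ulim_eq_of_eventually_eq (hyconst.mono fun k hk => ?_)).symm
          exact (ihy k (h.trans hk.symm)).symm
    · exact ulim_eq_of_eventually_eq (hxconst.mono fun k hk => ihx k hv (hk.trans h))

theorem IsSelective.add_left_cancel (hp : IsSelective p) (hu : InG p u) (hv : InG p v)
    (hw : InG p w) (h : u + v = u + w) : v = w := by
  induction hu with
  | principal n => exact pure_add_right_injective n h
  | lim x hx ih =>
    rcases hp.injAlong_or_eventually_eq_ulim x with hinj | hconst
    · have hadd : ∀ {z}, InG p z → InjAlong p fun k => x k + z := fun hz =>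
        hinj.of_imp fun j k hjk => hp.add_right_cancel (hx j) (hx k) hz hjk
      obtain ⟨k, hk⟩ := (hp.eventually_eq_of_ulim_eq (hadd hv) (hadd hw) h).exists
      exact ih k hk
    · obtain ⟨k, hk⟩ := hconst.exists
      exact ih k (hk ▸ h)

end Cancellation

/-- If `p` is selective then `𝓖^p` is a cancellative subsemigroup of `(βℕ, +)`. -/
theorem statement19 (p : Ultrafilter ℕ) (hp : IsSelective p) :
    ∀ u v w : Ultrafilter ℕ, InG p u → InG p v → InG p w →
      (u + w = v + w → u = v) ∧ (u + v = u + w → v = w) := by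
  intro u v w hu hv hw
  exact ⟨hp.add_right_cancel hu hv hw, hp.add_left_cancel hu hv hw⟩
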